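/- Fix i, j ∈ {0,1} and u, v ∈ ℝ, and define the quadrant log-likelihood ℓ(r) = i·j·log Φ₂(u,v;r) + i·(1-j)·log Φ₂(u,-v;-r) + (1-i)·j·log Φ₂(-u,v;-r) + (1-i)·(1-j)·log Φ₂(-u,-v;r). Then ℓ is differentiable at every r ∈ (-1,1) with derivative ℓ'(r) = ( i·j/Φ₂(u,v;r) - i·(1-j)/Φ₂(u,-v;-r) - (1-i)·j/Φ₂(-u,v;-r) + (1-i)·(1-j)/Φ₂(-u,-v;r) ) · φ₂(u,v;r). (This is the third component of the BDR score vector, equation (15) of the paper, specialized to the correlation parameter.) -/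

import Mathlib

/-!
Conditioning on the first coordinate gives, with `σ = √(1 - ρ²)`,
`phi2 s t ρ = phi s * (phi ((t - ρ s) / σ) / σ)`, hence
`Phi2 u v ρ = ∫ s in Iic u, phi s * Phi ((v - ρ s) / σ)` (`Phi2_eq`).
In this single integral `ρ` occurs only inside `Phi`, so differentiating under the integral sign
is dominated by a multiple of `phi s * (|v| + |s|)`. The `ρ`-derivative of the integrand is
`phi2 s v ρ * ((ρ v - s) / (1 - ρ²))`, which is exactly `∂/∂s phi2 s v ρ`. The fundamental theorem
of calculus on `Iic u` therefore yields Plackett's identity `∂/∂ρ Phi2 u v ρ = phi2 u v ρ`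
(`hasDerivAt_Phi2`). The score formula follows by the chain rule, the positivity of `Phi2`, and the
invariance of `phi2` under changing the signs of `ρ` and of one of its two arguments.
-/


open Real MeasureTheory

/-- Standard normal density. -/
noncomputable def phi (t : ℝ) : ℝ := (Real.sqrt (2 * Real.pi))⁻¹ * Real.exp (-(t ^ 2) / 2)

/-- Standard normal CDF. -/
noncomputable def Phi (u : ℝ) : ℝ := ∫ t in Set.Iic u, phi t

/-- Standard bivariate normal density with correlation ρ. -/
noncomputable def phi2 (s t ρ : ℝ) : ℝ :=
  (2 * Real.pi * Real.sqrt (1 - ρ ^ 2))⁻¹ *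
    Real.exp (-(s ^ 2 - 2 * ρ * s * t + t ^ 2) / (2 * (1 - ρ ^ 2)))

/-- Standard bivariate normal CDF with correlation ρ. -/
noncomputable def Phi2 (u v ρ : ℝ) : ℝ :=
  ∫ s in Set.Iic u, ∫ t in Set.Iic v, phi2 s t ρ

lemma phi_pos (t : ℝ) : 0 < phi t := by
  unfold phi; positivity

lemma continuous_phi : Continuous phi := by
  unfold phi; fun_prop

lemma phi_le_one (t : ℝ) : phi t ≤ 1 := by
  unfold phi
  have h1 : (Real.sqrt (2 * Real.pi))⁻¹ ≤ 1 := by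
    apply inv_le_one_of_one_le₀
    rw [Real.one_le_sqrt]
    nlinarith [Real.pi_gt_three]
  have h2 : Real.exp (-(t ^ 2) / 2) ≤ 1 := by
    rw [Real.exp_le_one_iff]; nlinarith [sq_nonneg t]
  exact mul_le_one₀ h1 (Real.exp_pos _).le h2

lemma integrable_phi : Integrable phi := by
  have h := (integrable_exp_neg_mul_sq (b := 1 / 2) (by norm_num)).const_mul
    (Real.sqrt (2 * Real.pi))⁻¹
  convert h using 2 with t
  unfold phi
  ring_nf

lemma integrable_phi_mul_abs : Integrable (fun s => phi s * |s|) := by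
  have h := ((integrable_mul_exp_neg_mul_sq (b := 1 / 2) (by norm_num)).abs).const_mul
    (Real.sqrt (2 * Real.pi))⁻¹
  convert h using 2 with t
  rw [abs_mul, abs_of_pos (Real.exp_pos _)]
  unfold phi
  ring_nf

lemma tendsto_phi_atBot : Filter.Tendsto phi Filter.atBot (nhds 0) := by
  have h1 : Filter.Tendsto (fun t : ℝ => -(t ^ 2) / 2) Filter.atBot Filter.atBot := by
    refine Filter.tendsto_atBot_mono' _ ?_ Filter.tendsto_id
    filter_upwards [Filter.eventually_le_atBot (-2 : ℝ)] with t ht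
    simp only [id]
    nlinarith
  have h := (Real.tendsto_exp_atBot.comp h1).const_mul (Real.sqrt (2 * Real.pi))⁻¹
  rw [mul_zero] at h
  exact h

lemma hasDerivAt_Phi (x : ℝ) : HasDerivAt Phi (phi x) x := by
  have h : Phi = fun u => Phi 0 + ∫ t in (0 : ℝ)..u, phi t := by
    funext u
    have := intervalIntegral.integral_Iic_sub_Iic (μ := volume)
      (integrable_phi.integrableOn (s := Set.Iic 0)) (integrable_phi.integrableOn (s := Set.Iic u))
    unfold Phi
    linarith
  rw [h]
  exact (intervalIntegral.integral_hasDerivAt_right (continuous_phi.intervalIntegrable _ _)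
    (continuous_phi.stronglyMeasurableAtFilter _ _) continuous_phi.continuousAt).const_add _

lemma continuous_Phi : Continuous Phi :=
  continuous_iff_continuousAt.2 fun x => (hasDerivAt_Phi x).continuousAt

lemma setIntegral_Iic_pos {f : ℝ → ℝ} (u : ℝ) (hf : Integrable f) (hpos : ∀ t, 0 < f t) :
    0 < ∫ t in Set.Iic u, f t := by
  rw [setIntegral_pos_iff_support_of_nonneg_ae (Filter.Eventually.of_forall fun t => (hpos t).le)
    hf.integrableOn]
  have : Function.support f = Set.univ := by
    ext t; simp [(hpos t).ne']
  simp [this]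

lemma Phi_pos (x : ℝ) : 0 < Phi x := setIntegral_Iic_pos x integrable_phi phi_pos

lemma Phi_le (x : ℝ) : Phi x ≤ ∫ t, phi t :=
  setIntegral_le_integral integrable_phi (Filter.Eventually.of_forall fun t => (phi_pos t).le)

lemma one_sub_sq_pos {ρ : ℝ} (hρ : ρ ∈ Set.Ioo (-1 : ℝ) 1) : 0 < 1 - ρ ^ 2 := by
  nlinarith [hρ.1, hρ.2]

/-- The joint density is the marginal density of the first coordinate times the conditional
density of the second, which is normal with mean `ρ s` and variance `1 - ρ²`. -/
lemma phi2_eq {ρ : ℝ} (hρ : ρ ∈ Set.Ioo (-1 : ℝ) 1) (s t : ℝ) :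
    phi2 s t ρ = phi s * (phi ((t - ρ * s) / √(1 - ρ ^ 2)) / √(1 - ρ ^ 2)) := by
  have hk := one_sub_sq_pos hρ
  have hσ := Real.sqrt_pos.2 hk
  have hinv : (2 * π * √(1 - ρ ^ 2))⁻¹ = (√(2 * π))⁻¹ * ((√(2 * π))⁻¹ / √(1 - ρ ^ 2)) := by
    have h2π : √(2 * π) * √(2 * π) = 2 * π := Real.mul_self_sqrt (by positivity)
    rw [mul_inv, ← mul_div_assoc, ← mul_inv (√(2 * π)), h2π, div_eq_mul_inv]
  have hexp : -(s ^ 2 - 2 * ρ * s * t + t ^ 2) / (2 * (1 - ρ ^ 2))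
      = -(s ^ 2) / 2 + -(((t - ρ * s) / √(1 - ρ ^ 2)) ^ 2) / 2 := by
    rw [div_pow, Real.sq_sqrt hk.le]
    field_simp
    ring
  unfold phi2 phi
  rw [hexp, Real.exp_add, hinv]
  ring

lemma setIntegral_phi_affine (v m : ℝ) {σ : ℝ} (hσ : 0 < σ) :
    ∫ t in Set.Iic v, phi ((t - m) / σ) / σ = Phi ((v - m) / σ) := by
  have h : ∀ t, (Set.Iic v).indicator (fun t => phi ((t - m) / σ) / σ) t
      = (fun x => (Set.Iic ((v - m) / σ)).indicator phi (x / σ) / σ) (t - m) := by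
    intro t
    by_cases ht : t ≤ v
    · have : (t - m) / σ ≤ (v - m) / σ := by gcongr
      simp [ht, this]
    · have : ¬ (t - m) / σ ≤ (v - m) / σ := by
        rw [div_le_div_iff_of_pos_right hσ]; linarith
      simp [ht, this]
  rw [← integral_indicator measurableSet_Iic, integral_congr_ae (Filter.Eventually.of_forall h),
    integral_sub_right_eq_self (fun x => (Set.Iic ((v - m) / σ)).indicator phi (x / σ) / σ),
    integral_div, Measure.integral_comp_div, integral_indicator measurableSet_Iic, smul_eq_mul,
    abs_of_pos hσ, mul_div_cancel_left₀ _ hσ.ne', Phi]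

lemma Phi2_eq {ρ : ℝ} (hρ : ρ ∈ Set.Ioo (-1 : ℝ) 1) (u v : ℝ) :
    Phi2 u v ρ = ∫ s in Set.Iic u, phi s * Phi ((v - ρ * s) / √(1 - ρ ^ 2)) := by
  unfold Phi2
  congr 1
  funext s
  simp_rw [phi2_eq hρ, integral_const_mul]
  rw [setIntegral_phi_affine v _ (Real.sqrt_pos.2 (one_sub_sq_pos hρ))]

lemma continuous_phi_mul_Phi (v ρ : ℝ) :
    Continuous fun s => phi s * Phi ((v - ρ * s) / √(1 - ρ ^ 2)) :=
  continuous_phi.mul (continuous_Phi.comp (by fun_prop))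

lemma integrable_phi_mul_Phi (v ρ : ℝ) :
    Integrable fun s => phi s * Phi ((v - ρ * s) / √(1 - ρ ^ 2)) := by
  refine (integrable_phi.mul_const (∫ t, phi t)).mono'
    (continuous_phi_mul_Phi v ρ).aestronglyMeasurable (Filter.Eventually.of_forall fun s => ?_)
  rw [Real.norm_of_nonneg (mul_pos (phi_pos _) (Phi_pos _)).le]
  exact mul_le_mul_of_nonneg_left (Phi_le _) (phi_pos _).le

lemma Phi2_pos {ρ : ℝ} (hρ : ρ ∈ Set.Ioo (-1 : ℝ) 1) (u v : ℝ) : 0 < Phi2 u v ρ := by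
  rw [Phi2_eq hρ]
  exact setIntegral_Iic_pos u (integrable_phi_mul_Phi v ρ)
    fun s => mul_pos (phi_pos _) (Phi_pos _)

lemma hasDerivAt_phi2_left {ρ : ℝ} (hρ : ρ ∈ Set.Ioo (-1 : ℝ) 1) (s v : ℝ) :
    HasDerivAt (fun s => phi2 s v ρ) (phi2 s v ρ * ((ρ * v - s) / (1 - ρ ^ 2))) s := by
  have hk := one_sub_sq_pos hρ
  have h1 : HasDerivAt (fun s : ℝ => -(s ^ 2 - 2 * ρ * s * v + v ^ 2) / (2 * (1 - ρ ^ 2)))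
      ((ρ * v - s) / (1 - ρ ^ 2)) s := by
    have h := (((((hasDerivAt_id s).pow 2).sub
      (((hasDerivAt_id s).const_mul (2 * ρ)).mul_const v)).add_const (v ^ 2)).neg).div_const
        (2 * (1 - ρ ^ 2))
    refine h.congr_deriv ?_
    simp only [id, Nat.cast_ofNat]
    field_simp
    ring
  have h := h1.exp.const_mul (2 * Real.pi * Real.sqrt (1 - ρ ^ 2))⁻¹
  unfold phi2
  exact h.congr_deriv (by ring)

/-- The heart of Plackett's identity: the `ρ`-derivative of the integrand in `Phi2_eq` coincides
with the `s`-derivative of `phi2 s v ρ` found in `hasDerivAt_phi2_left`. -/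
lemma hasDerivAt_phi_mul_Phi {ρ : ℝ} (hρ : ρ ∈ Set.Ioo (-1 : ℝ) 1) (s v : ℝ) :
    HasDerivAt (fun ρ => phi s * Phi ((v - ρ * s) / √(1 - ρ ^ 2)))
      (phi2 s v ρ * ((ρ * v - s) / (1 - ρ ^ 2))) ρ := by
  have hk := one_sub_sq_pos hρ
  have hσ := Real.sqrt_pos.2 hk
  have hsq := Real.sq_sqrt hk.le
  have hroot : HasDerivAt (fun ρ : ℝ => √(1 - ρ ^ 2)) (-ρ / √(1 - ρ ^ 2)) ρ := by
    have h := (((hasDerivAt_id ρ).pow 2).const_sub 1).sqrt (by simpa using hk.ne')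
    refine h.congr_deriv ?_
    simp only [id, Pi.pow_apply, Nat.cast_ofNat]
    field_simp
    ring
  have hnum : HasDerivAt (fun ρ : ℝ => v - ρ * s) (-s) ρ := by
    simpa using ((hasDerivAt_id ρ).mul_const s).const_sub v
  have h := ((hasDerivAt_Phi _).comp ρ (hnum.div hroot hσ.ne')).const_mul (phi s)
  refine h.congr_deriv ?_
  rw [phi2_eq hρ]
  simp only [Pi.div_apply]
  have hnumer : (-s * √(1 - ρ ^ 2) - (v - ρ * s) * (-ρ / √(1 - ρ ^ 2))) / √(1 - ρ ^ 2) ^ 2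
      = (ρ * v - s) / (1 - ρ ^ 2) / √(1 - ρ ^ 2) := by
    rw [div_div, mul_comm (1 - ρ ^ 2), ← div_div, hsq]
    congr 1
    rw [eq_div_iff hσ.ne', sub_mul, mul_assoc (v - ρ * s), div_mul_cancel₀ _ hσ.ne']
    linear_combination (-s) * hsq
  rw [hnumer]
  ring

/-- Plackett's identity. -/
lemma hasDerivAt_Phi2 (u v : ℝ) {r : ℝ} (hr : r ∈ Set.Ioo (-1 : ℝ) 1) :
    HasDerivAt (fun ρ => Phi2 u v ρ) (phi2 u v r) r := by
  -- On `(-c, c)`, a neighbourhood of `r` with `c < 1`, the variance `1 - ρ²` stays bounded away from zero.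
  obtain ⟨c, hrc, hc1⟩ := exists_between (abs_lt.2 hr)
  have hc0 : 0 < c := (abs_nonneg r).trans_lt hrc
  have hsub : Set.Ioo (-c) c ⊆ Set.Ioo (-1 : ℝ) 1 := Set.Ioo_subset_Ioo (by linarith) hc1.le
  have hnhds : Set.Ioo (-c) c ∈ nhds r := isOpen_Ioo.mem_nhds (abs_lt.1 hrc)
  have hk : 0 < 1 - c ^ 2 := by nlinarith
  have hdiff := hasDerivAt_integral_of_dominated_loc_of_deriv_le
    (μ := volume.restrict (Set.Iic u)) (x₀ := r)
    (F := fun ρ s => phi s * Phi ((v - ρ * s) / √(1 - ρ ^ 2)))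
    (F' := fun ρ s => phi2 s v ρ * ((ρ * v - s) / (1 - ρ ^ 2)))
    (bound := fun s => (√(1 - c ^ 2))⁻¹ * (1 - c ^ 2)⁻¹ * (|v| * phi s + phi s * |s|))
    hnhds
    (Filter.Eventually.of_forall fun ρ => (continuous_phi_mul_Phi v ρ).aestronglyMeasurable)
    (integrable_phi_mul_Phi v r).integrableOn
    (Continuous.aestronglyMeasurable (by unfold phi2; fun_prop))
    (Filter.Eventually.of_forall fun s ρ hρ => by
      have hle : 1 - c ^ 2 ≤ 1 - ρ ^ 2 := by nlinarith [hρ.1, hρ.2]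
      have hρk := one_sub_sq_pos (hsub hρ)
      have hρabs : |ρ| ≤ 1 := (abs_lt.2 (hsub hρ)).le
      have hlin : |ρ * v - s| ≤ |v| + |s| := by
        calc |ρ * v - s| ≤ |ρ * v| + |s| := abs_sub _ _
          _ ≤ |v| + |s| := by
            rw [abs_mul]
            nlinarith [abs_nonneg v]
      have hφ := phi_pos s
      have hσ := Real.sqrt_pos.2 hk
      have hdens : phi2 s v ρ ≤ phi s * (1 / √(1 - c ^ 2)) := by
        rw [phi2_eq (hsub hρ)]
        gcongr
        exact phi_le_one _
      have h0 : 0 ≤ phi2 s v ρ := by unfold phi2; positivity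
      rw [norm_mul, Real.norm_of_nonneg h0, Real.norm_eq_abs, abs_div, abs_of_pos hρk]
      calc phi2 s v ρ * (|ρ * v - s| / (1 - ρ ^ 2))
          ≤ phi s * (1 / √(1 - c ^ 2)) * ((|v| + |s|) / (1 - c ^ 2)) := by gcongr
        _ = _ := by field_simp)
    (((integrable_phi.const_mul |v|).add integrable_phi_mul_abs).const_mul _).integrableOn
    (Filter.Eventually.of_forall fun s ρ hρ => hasDerivAt_phi_mul_Phi (hsub hρ) s v)
  have hlim : Filter.Tendsto (fun s => phi2 s v r) Filter.atBot (nhds 0) := by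
    have h := tendsto_phi_atBot.mul_const (1 / √(1 - r ^ 2))
    rw [zero_mul] at h
    refine squeeze_zero (fun s => by unfold phi2; positivity) (fun s => ?_) h
    rw [phi2_eq hr]
    have := phi_pos s
    gcongr
    exact phi_le_one _
  have hFTC := integral_Iic_of_hasDerivAt_of_tendsto' (a := u)
    (fun s _ => hasDerivAt_phi2_left hr s v) hdiff.1 hlim
  rw [sub_zero] at hFTC
  rw [← hFTC]
  refine hdiff.2.congr_of_eventuallyEq ?_
  filter_upwards [hnhds] with ρ hρ
  exact Phi2_eq (hsub hρ) u v

lemma hasDerivAt_Phi2_neg (u v : ℝ) {r : ℝ} (hr : r ∈ Set.Ioo (-1 : ℝ) 1) :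
    HasDerivAt (fun ρ => Phi2 u v (-ρ)) (-phi2 u v (-r)) r := by
  have hr' : -r ∈ Set.Ioo (-1 : ℝ) 1 := ⟨by linarith [hr.2], by linarith [hr.1]⟩
  have h := (hasDerivAt_Phi2 u v hr').comp r (hasDerivAt_neg r)
  exact h.congr_deriv (by ring)

/-- The third component of the BDR score vector: the quadrant log-likelihood in the
correlation parameter is differentiable at every r ∈ (-1,1) with the stated derivative. -/
theorem bdr_score_correlation (i j : ℝ) (hi : i = 0 ∨ i = 1) (hj : j = 0 ∨ j = 1)
    (u v : ℝ) (r : ℝ) (hr : r ∈ Set.Ioo (-1 : ℝ) 1) :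
    HasDerivAt (fun s =>
        i * j * Real.log (Phi2 u v s) + i * (1 - j) * Real.log (Phi2 u (-v) (-s))
          + (1 - i) * j * Real.log (Phi2 (-u) v (-s))
          + (1 - i) * (1 - j) * Real.log (Phi2 (-u) (-v) s))
      ((i * j / Phi2 u v r - i * (1 - j) / Phi2 u (-v) (-r)
          - (1 - i) * j / Phi2 (-u) v (-r) + (1 - i) * (1 - j) / Phi2 (-u) (-v) r)
        * phi2 u v r) r := by
  have hr' : -r ∈ Set.Ioo (-1 : ℝ) 1 := ⟨by linarith [hr.2], by linarith [hr.1]⟩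
  have e1 : phi2 u (-v) (-r) = phi2 u v r := by unfold phi2; ring_nf
  have e2 : phi2 (-u) v (-r) = phi2 u v r := by unfold phi2; ring_nf
  have e3 : phi2 (-u) (-v) r = phi2 u v r := by unfold phi2; ring_nf
  have h1 := ((hasDerivAt_Phi2 u v hr).log (Phi2_pos hr u v).ne').const_mul (i * j)
  have h2 := ((hasDerivAt_Phi2_neg u (-v) hr).log (Phi2_pos hr' u (-v)).ne').const_mul
    (i * (1 - j))
  have h3 := ((hasDerivAt_Phi2_neg (-u) v hr).log (Phi2_pos hr' (-u) v).ne').const_mul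
    ((1 - i) * j)
  have h4 := ((hasDerivAt_Phi2 (-u) (-v) hr).log (Phi2_pos hr (-u) (-v)).ne').const_mul
    ((1 - i) * (1 - j))
  rw [e1] at h2
  rw [e2] at h3
  rw [e3] at h4
  exact (((h1.add h2).add h3).add h4).congr_deriv (by ring)
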